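/- Let λ=(λ_1,...,λ_l) be a partition of length l and 0 ≤ k ≤ l−1. If α=(α_1,α_2,...) is a multi-index with finitely many nonzero entries and wt α < N_{λ,k}, then the polynomial ∂^α s_λ(t) evaluated at t = [x_1]+⋯+[x_k] is identically zero as a polynomial in x_1,...,x_k (for k=0 this means ∂^α s_λ(0) = 0). -/

import Mathlib

open MvPolynomial

/-- The polynomial `p_n(t)` defined by `exp(Σ_{n≥1} t_n k^n) = Σ_{n≥0} p_n(t) k^n`,
as a polynomial in the variables `t_1, t_2, ...` (variable `X n` stands for `t_n`). -/
noncomputable def pS (n : ℕ) : MvPolynomial ℕ ℚ :=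
  ∑ m ∈ Finset.range (n + 1), (Nat.factorial m : ℚ)⁻¹ •
    ∑ c ∈ Finset.univ.filter
        (fun c : Fin m → Fin (n + 1) =>
          (∑ j, ((c j : ℕ))) = n ∧ ∀ j, 1 ≤ (c j : ℕ)),
      ∏ j, X ((c j : ℕ))

/-- `p_n` for `n : ℤ`, with `p_n = 0` for `n < 0`. -/
noncomputable def pz (n : ℤ) : MvPolynomial ℕ ℚ :=
  if 0 ≤ n then pS n.toNat else 0

/-- The Schur function `s_λ(t) = det(p_{λ_i - i + j})_{1 ≤ i,j ≤ l}` (here `0`-indexed). -/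
noncomputable def schur {l : ℕ} (lam : Fin l → ℕ) : MvPolynomial ℕ ℚ :=
  Matrix.det (Matrix.of fun a b : Fin l =>
    pz ((lam a : ℤ) - ((a : ℕ) : ℤ) + ((b : ℕ) : ℤ)))

/-- Substitution `t_n ↦ (x_1^n + ⋯ + x_k^n)/n`, i.e. `t = [x_1] + ⋯ + [x_k]`. -/
noncomputable def toPowerSums (k : ℕ) (f : MvPolynomial ℕ ℚ) : MvPolynomial (Fin k) ℚ :=
  aeval (fun n : ℕ => (n : ℚ)⁻¹ • ∑ i : Fin k, X i ^ n) f

/-- Iterated partial derivative `∂_{i_1} ⋯ ∂_{i_r}` for a list `L = [i_1, ..., i_r]`. -/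
noncomputable def derivs (L : List ℕ) (f : MvPolynomial ℕ ℚ) : MvPolynomial ℕ ℚ :=
  L.foldr (fun i g => pderiv i g) f

/-- The entries of a partition `λ` padded by zeros (`0`-indexed). -/
def pad {l : ℕ} (lam : Fin l → ℕ) (a : ℕ) : ℕ := if h : a < l then lam ⟨a, h⟩ else 0

/-- The power series `Σ_{n≥1} t_n z^n`. -/
noncomputable def timeSeries : PowerSeries (MvPolynomial ℕ ℚ) :=
  PowerSeries.mk fun n => if n = 0 then 0 else X n

theorem constantCoeff_timeSeries : PowerSeries.constantCoeff timeSeries = 0 := by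
  simp [timeSeries, ← PowerSeries.coeff_zero_eq_constantCoeff_apply]

theorem coeff_timeSeries_pow_eq_zero {n m : ℕ} (h : n < m) :
    PowerSeries.coeff n (timeSeries ^ m) = 0 := by
  have h1 : (PowerSeries.X : PowerSeries (MvPolynomial ℕ ℚ)) ^ m ∣ timeSeries ^ m :=
    pow_dvd_pow_of_dvd (PowerSeries.X_dvd_iff.2 constantCoeff_timeSeries) m
  exact PowerSeries.X_pow_dvd_iff.1 h1 n h

theorem coeff_timeSeries_pow (n m : ℕ) :
    PowerSeries.coeff n (timeSeries ^ m) =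
      ∑ c ∈ Finset.univ.filter
        (fun c : Fin m → Fin (n + 1) =>
          (∑ j, ((c j : ℕ))) = n ∧ ∀ j, 1 ≤ (c j : ℕ)),
      ∏ j, (X ((c j : ℕ)) : MvPolynomial ℕ ℚ) := by
  have htrunc : (timeSeries.trunc (n + 1)) =
      ∑ i : Fin (n + 1), Polynomial.monomial (i : ℕ)
        (if (i : ℕ) = 0 then 0 else (X (i : ℕ) : MvPolynomial ℕ ℚ)) := by
    rw [PowerSeries.trunc_apply, Finset.sum_fin_eq_sum_range, Nat.Ico_zero_eq_range]
    refine Finset.sum_congr rfl fun i hi => ?_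
    rw [dif_pos (Finset.mem_range.1 hi)]
    simp [timeSeries]
  have hmon : ∀ c : Fin m → Fin (n + 1), ∏ j, Polynomial.monomial (c j : ℕ)
        (if (c j : ℕ) = 0 then 0 else (X (c j : ℕ) : MvPolynomial ℕ ℚ)) =
      Polynomial.monomial (∑ j, (c j : ℕ))
        (∏ j, if (c j : ℕ) = 0 then 0 else (X (c j : ℕ) : MvPolynomial ℕ ℚ)) := by
    intro c
    simp only [← Polynomial.C_mul_X_pow_eq_monomial, Finset.prod_mul_distrib,
      Finset.prod_pow_eq_pow_sum, map_prod]
  rw [← PowerSeries.coeff_coe_trunc_of_lt (Nat.lt_succ_self n), ← PowerSeries.trunc_trunc_pow,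
    PowerSeries.coeff_coe_trunc_of_lt (Nat.lt_succ_self n), ← Polynomial.coe_pow,
    Polynomial.coeff_coe, Nat.succ_eq_add_one, htrunc, ← Fin.prod_const, Finset.prod_univ_sum,
    Polynomial.finsetSum_coeff, Fintype.piFinset_univ, Finset.sum_filter]
  refine Finset.sum_congr rfl fun c _ => ?_
  rw [hmon, Polynomial.coeff_monomial]
  by_cases h1 : ∑ j, (c j : ℕ) = n
  · by_cases h2 : ∀ j, 1 ≤ (c j : ℕ)
    · rw [if_pos h1, if_pos ⟨h1, h2⟩]
      refine Finset.prod_congr rfl fun j _ => if_neg ?_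
      have := h2 j
      omega
    · rw [if_pos h1, if_neg (fun h => h2 h.2)]
      push Not at h2
      obtain ⟨j, hj⟩ := h2
      exact Finset.prod_eq_zero (Finset.mem_univ j) (if_pos (by omega))
  · rw [if_neg h1, if_neg (fun h => h1 h.1)]

theorem pS_eq_sum_coeff {n N : ℕ} (h : n < N) :
    pS n = ∑ m ∈ Finset.range N,
      (Nat.factorial m : ℚ)⁻¹ • PowerSeries.coeff n (timeSeries ^ m) := by
  rw [pS]
  simp only [← coeff_timeSeries_pow]
  refine Finset.sum_subset (fun m hm => ?_) fun m _ hm => ?_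
  · simp only [Finset.mem_range] at hm ⊢
    omega
  · simp only [Finset.mem_range] at hm
    rw [coeff_timeSeries_pow_eq_zero (by omega), smul_zero]

theorem pderiv_coeff_timeSeries_pow {i : ℕ} (hi : 1 ≤ i) (m n : ℕ) :
    pderiv i (PowerSeries.coeff n (timeSeries ^ (m + 1))) =
      (m + 1 : ℚ) • PowerSeries.coeff n (timeSeries ^ m * PowerSeries.X ^ i) := by
  have hT : ∀ n, pderiv i (PowerSeries.coeff n timeSeries) =
      PowerSeries.coeff n (PowerSeries.X ^ i) := by
    intro n
    rw [PowerSeries.coeff_X_pow, timeSeries, PowerSeries.coeff_mk]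
    split_ifs with h1 h2 h2
    · omega
    · simp
    · rw [h2, pderiv_X_self]
    · rw [pderiv_X_of_ne h2]
  have hmul : ∀ (A B A' B' : PowerSeries (MvPolynomial ℕ ℚ)),
      (∀ n, pderiv i (PowerSeries.coeff n A) = PowerSeries.coeff n A') →
      (∀ n, pderiv i (PowerSeries.coeff n B) = PowerSeries.coeff n B') → ∀ n,
      pderiv i (PowerSeries.coeff n (A * B)) = PowerSeries.coeff n (A' * B + A * B') := by
    intro A B A' B' hA hB n
    simp only [PowerSeries.coeff_mul, map_add, map_sum, pderiv_mul, hA, hB,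
      Finset.sum_add_distrib]
  induction m generalizing n with
  | zero => simp [hT]
  | succ m ih =>
    rw [pow_succ, hmul (timeSeries ^ (m + 1)) timeSeries
      ((m + 1 : ℚ) • (timeSeries ^ m * PowerSeries.X ^ i)) (PowerSeries.X ^ i)
      (fun n => by rw [ih n, PowerSeries.coeff_smul]) hT]
    rw [← PowerSeries.coeff_smul]
    congr 1
    have hcomm : timeSeries ^ m * PowerSeries.X ^ i * timeSeries =
        timeSeries ^ (m + 1) * PowerSeries.X ^ i := by ring
    rw [smul_mul_assoc, hcomm]
    push_cast
    module

theorem pderiv_pS {i : ℕ} (hi : 1 ≤ i) (n : ℕ) :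
    pderiv i (pS n) = if i ≤ n then pS (n - i) else 0 := by
  have h1 : pderiv i (pS n) = ∑ m ∈ Finset.range (n + 1),
      (Nat.factorial m : ℚ)⁻¹ • PowerSeries.coeff n (timeSeries ^ m * PowerSeries.X ^ i) := by
    rw [pS_eq_sum_coeff (show n < n + 1 + 1 by omega), Finset.sum_range_succ', map_add, map_sum]
    have h0 : pderiv i ((Nat.factorial 0 : ℚ)⁻¹ • PowerSeries.coeff n (timeSeries ^ 0)) = 0 := by
      rw [pow_zero, PowerSeries.coeff_one, Derivation.map_smul]
      split_ifs <;> simp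
    rw [h0, add_zero]
    refine Finset.sum_congr rfl fun m _ => ?_
    rw [Derivation.map_smul, pderiv_coeff_timeSeries_pow hi, smul_smul, Nat.factorial_succ]
    congr 1
    push_cast
    have : (m : ℚ) + 1 ≠ 0 := by positivity
    have : (Nat.factorial m : ℚ) ≠ 0 := by positivity
    field_simp
  rw [h1]
  split_ifs with h
  · rw [pS_eq_sum_coeff (show n - i < n + 1 by omega)]
    simp only [PowerSeries.coeff_mul_X_pow', if_pos h]
  · simp [PowerSeries.coeff_mul_X_pow', h]

theorem pderiv_pz {i : ℕ} (hi : 1 ≤ i) (n : ℤ) : pderiv i (pz n) = pz (n - i) := by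
  rcases le_or_gt 0 n with h | h
  · lift n to ℕ using h
    rw [pz, if_pos (by positivity), Int.toNat_natCast, pderiv_pS hi, pz]
    split_ifs with h1 h2 h2
    · congr 1
      omega
    · omega
    · omega
    · rfl
  · rw [pz, pz, if_neg (by omega), if_neg (by omega), map_zero]

theorem mk_pS : PowerSeries.mk pS =
    (PowerSeries.exp (MvPolynomial ℕ ℚ)).subst timeSeries := by
  ext1 n
  rw [PowerSeries.coeff_mk, PowerSeries.coeff_subst'
    (PowerSeries.HasSubst.of_constantCoeff_zero' constantCoeff_timeSeries),
    finsum_eq_sum_of_support_subset (s := Finset.range (n + 1)),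
    pS_eq_sum_coeff (Nat.lt_succ_self n)]
  · refine Finset.sum_congr rfl fun m _ => ?_
    rw [PowerSeries.coeff_exp, smul_eq_mul, ← Algebra.smul_def, one_div]
  · intro m hm
    by_contra h
    simp only [Finset.coe_range, Set.mem_Iio, not_lt] at h
    refine hm ?_
    change _ • PowerSeries.coeff n (timeSeries ^ m) = 0
    rw [coeff_timeSeries_pow_eq_zero (by omega), smul_zero]

theorem derivative_mk_pS : PowerSeries.derivative (MvPolynomial ℕ ℚ) (PowerSeries.mk pS) =
    PowerSeries.mk pS * PowerSeries.derivative (MvPolynomial ℕ ℚ) timeSeries := by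
  rw [mk_pS, PowerSeries.derivative_subst
    (PowerSeries.HasSubst.of_constantCoeff_zero' constantCoeff_timeSeries),
    PowerSeries.derivative_exp]

theorem PowerSeries.derivative_map {R S : Type*} [CommRing R] [CommRing S] (φ : R →+* S)
    (f : PowerSeries R) : PowerSeries.derivative S (PowerSeries.map φ f) =
      PowerSeries.map φ (PowerSeries.derivative R f) := by
  ext n
  simp [PowerSeries.coeff_derivative]

theorem PowerSeries.derivative_prod_one_sub {R ι : Type*} [CommRing R] (s : Finset ι)
    (x : ι → R) :
    PowerSeries.derivative R (∏ i ∈ s, (1 - PowerSeries.C (x i) * PowerSeries.X)) =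
      -((∏ i ∈ s, (1 - PowerSeries.C (x i) * PowerSeries.X)) *
        PowerSeries.mk fun n => ∑ i ∈ s, x i ^ (n + 1)) := by
  classical
  induction s using Finset.induction_on with
  | empty =>
    have : (PowerSeries.mk fun _ => (0 : R)) = 0 := by ext; simp
    simp [this]
  | insert a s ha ih =>
    have h1 : (PowerSeries.mk fun n => ∑ i ∈ insert a s, x i ^ (n + 1)) =
        (PowerSeries.mk fun n => x a ^ (n + 1)) +
          PowerSeries.mk fun n => ∑ i ∈ s, x i ^ (n + 1) := by
      ext n
      simp [Finset.sum_insert ha]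
    have h2 : (1 - PowerSeries.C (x a) * PowerSeries.X) *
        (PowerSeries.mk fun n => x a ^ (n + 1)) = PowerSeries.C (x a) := by
      ext n
      rw [sub_mul, one_mul, mul_assoc, map_sub, PowerSeries.coeff_C_mul]
      cases n with
      | zero => simp
      | succ n => simp [PowerSeries.coeff_succ_X_mul]; ring
    have h3 : PowerSeries.derivative R (1 - PowerSeries.C (x a) * PowerSeries.X) =
        -PowerSeries.C (x a) := by
      simp [Derivation.leibniz]
    rw [Finset.prod_insert ha, Derivation.leibniz, ih, h1, h3, smul_eq_mul, smul_eq_mul]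
    linear_combination (∏ i ∈ s, (1 - PowerSeries.C (x i) * PowerSeries.X)) * h2

/-- The generating series `∏ (1 - x_i z)` of the signed elementary symmetric polynomials. -/
noncomputable def esymmSeries (k : ℕ) : PowerSeries (MvPolynomial (Fin k) ℚ) :=
  ∏ i : Fin k, (1 - PowerSeries.C (X i) * PowerSeries.X)

theorem coeff_zero_esymmSeries (k : ℕ) : PowerSeries.coeff 0 (esymmSeries k) = 1 := by
  simp [esymmSeries, map_prod]

theorem coeff_esymmSeries_eq_zero {k n : ℕ} (h : k < n) :
    PowerSeries.coeff n (esymmSeries k) = 0 := by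
  have h1 : esymmSeries k = ((∏ i : Fin k, (1 - Polynomial.C (X i) * Polynomial.X) :
      Polynomial (MvPolynomial (Fin k) ℚ)) : PowerSeries (MvPolynomial (Fin k) ℚ)) := by
    rw [esymmSeries, ← Polynomial.coeToPowerSeries.ringHom_apply, map_prod]
    simp
  rw [h1, Polynomial.coeff_coe]
  apply Polynomial.coeff_eq_zero_of_natDegree_lt
  refine lt_of_le_of_lt (Polynomial.natDegree_prod_le _ _) (lt_of_le_of_lt ?_ h)
  calc _ ≤ ∑ _i : Fin k, 1 := Finset.sum_le_sum fun i _ => by compute_degree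
    _ = k := by simp

theorem mk_toPowerSums_pS_mul (k : ℕ) :
    PowerSeries.mk (fun n => toPowerSums k (pS n)) * esymmSeries k = 1 := by
  set φ : MvPolynomial ℕ ℚ →+* MvPolynomial (Fin k) ℚ :=
    ((aeval (fun n : ℕ => (n : ℚ)⁻¹ • ∑ i : Fin k, X i ^ n) :
      MvPolynomial ℕ ℚ →ₐ[ℚ] MvPolynomial (Fin k) ℚ) :
        MvPolynomial ℕ ℚ →+* MvPolynomial (Fin k) ℚ) with hφ
  have hmk : PowerSeries.mk (fun n => toPowerSums k (pS n)) =
      PowerSeries.map φ (PowerSeries.mk pS) := by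
    ext1 n
    simp [toPowerSums, hφ]
  have hT : PowerSeries.map φ (PowerSeries.derivative (MvPolynomial ℕ ℚ) timeSeries) =
      PowerSeries.mk fun n => ∑ i : Fin k, X i ^ (n + 1) := by
    ext1 n
    rw [PowerSeries.coeff_map, PowerSeries.coeff_derivative, timeSeries, PowerSeries.coeff_mk,
      PowerSeries.coeff_mk, if_neg (Nat.succ_ne_zero n), map_mul, hφ]
    have hn : (n + 1 : MvPolynomial (Fin k) ℚ) = C (n + 1 : ℚ) := by simp
    have hne : (n + 1 : ℚ) ≠ 0 := by positivity
    simp only [RingHom.coe_coe, aeval_X, map_add, map_natCast, map_one]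
    rw [hn, mul_comm, ← smul_eq_C_mul, smul_smul]
    push_cast
    rw [mul_inv_cancel₀ hne, one_smul]
  rw [hmk]
  apply PowerSeries.derivative.ext
  · rw [Derivation.leibniz, PowerSeries.derivative_map, derivative_mk_pS, map_mul, hT,
      esymmSeries, PowerSeries.derivative_prod_one_sub, smul_eq_mul, smul_eq_mul,
      PowerSeries.derivative_one]
    ring
  · have h0 : pS 0 = 1 := by simp [pS_eq_sum_coeff (show 0 < 1 by omega)]
    rw [map_mul, ← PowerSeries.coeff_zero_eq_constantCoeff_apply,
      ← PowerSeries.coeff_zero_eq_constantCoeff_apply, coeff_zero_esymmSeries]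
    simp [h0]

theorem sum_toPowerSums_pz_mul_coeff {k b : ℕ} (hb : k ≤ b) (m : ℤ) :
    ∑ c ∈ Finset.range (b + 1), toPowerSums k (pz (m + c)) *
      PowerSeries.coeff (b - c) (esymmSeries k) = if m + b = 0 then 1 else 0 := by
  rw [← Finset.sum_range_reflect]
  have h1 : ∀ j ∈ Finset.range (b + 1),
      toPowerSums k (pz (m + ((b + 1 - 1 - j : ℕ) : ℤ))) *
        PowerSeries.coeff (b - (b + 1 - 1 - j)) (esymmSeries k) =
      toPowerSums k (pz (m + b - j)) * PowerSeries.coeff j (esymmSeries k) := by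
    intro j hj
    have hj' := Finset.mem_range.1 hj
    have e1 : m + ((b + 1 - 1 - j : ℕ) : ℤ) = m + b - j := by omega
    have e2 : b - (b + 1 - 1 - j) = j := by omega
    rw [e1, e2]
  rw [Finset.sum_congr rfl h1]
  rcases lt_or_ge (m + b) 0 with h | h
  · rw [if_neg h.ne]
    refine Finset.sum_eq_zero fun j _ => ?_
    rw [pz, if_neg (by omega), toPowerSums, map_zero, zero_mul]
  · obtain ⟨n, hn⟩ := Int.eq_ofNat_of_zero_le h
    rw [hn]
    have h2 := congrArg (PowerSeries.coeff n) (mk_toPowerSums_pS_mul k)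
    rw [mul_comm, PowerSeries.coeff_mul, Finset.Nat.sum_antidiagonal_eq_sum_range_succ_mk,
      PowerSeries.coeff_one] at h2
    have h3 : ((n : ℤ) = 0) ↔ n = 0 := by omega
    simp only [h3]
    rw [← h2]
    have key : ∀ N, n ≤ N ∨ k ≤ N → ∑ j ∈ Finset.range (N + 1),
        toPowerSums k (pz (n - j)) * PowerSeries.coeff j (esymmSeries k) =
        ∑ j ∈ Finset.range (n + k + 1),
          toPowerSums k (pz (n - j)) * PowerSeries.coeff j (esymmSeries k) := by
      intro N hN
      have aux : ∀ j, n < j ∨ k < j →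
          toPowerSums k (pz (n - j)) * PowerSeries.coeff j (esymmSeries k) = 0 := by
        rintro j (hj | hj)
        · rw [pz, if_neg (by omega), toPowerSums, map_zero, zero_mul]
        · rw [coeff_esymmSeries_eq_zero hj, mul_zero]
      rcases le_total N (n + k) with hle | hle
      · refine Finset.sum_subset (fun j hj => ?_) fun j _ hj => aux j ?_
        · simp only [Finset.mem_range] at hj ⊢
          omega
        · simp only [Finset.mem_range] at hj
          omega
      · symm
        refine Finset.sum_subset (fun j hj => ?_) fun j _ hj => aux j ?_
        · simp only [Finset.mem_range] at hj ⊢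
          omega
        · simp only [Finset.mem_range] at hj
          omega
    rw [key b (Or.inr hb), ← key n (Or.inl le_rfl)]
    refine Finset.sum_congr rfl fun j hj => ?_
    have hj' := Finset.mem_range.1 hj
    rw [mul_comm, PowerSeries.coeff_mk, pz, if_pos (by omega)]
    congr 3
    omega

/-- The determinant `det(p_{m_a + b})` attached to a row-shift vector `m`. -/
noncomputable def shiftDet {l : ℕ} (m : Fin l → ℤ) : MvPolynomial ℕ ℚ :=
  Matrix.det (Matrix.of fun a b : Fin l => pz (m a + ((b : ℕ) : ℤ)))

theorem Derivation.map_det {R A n : Type*} [CommRing R] [CommRing A] [Algebra R A] [Fintype n]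
    [DecidableEq n] (D : Derivation R A A) (M : Matrix n n A) :
    D M.det = ∑ a, (M.updateRow a fun b => D (M a b)).det := by
  have hprod : ∀ (s : Finset n) (f : n → A),
      D (∏ i ∈ s, f i) = ∑ a ∈ s, ∏ i ∈ s, Function.update f a (D (f a)) i := by
    intro s f
    induction s using Finset.induction_on with
    | empty => simp
    | insert c s hc ih =>
      rw [Finset.prod_insert hc, Derivation.leibniz, ih, Finset.sum_insert hc,
        Finset.prod_insert hc, Function.update_self, smul_eq_mul, smul_eq_mul, Finset.mul_sum,
        Finset.prod_congr rfl (fun i hi => Function.update_of_ne (f := f)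
          (fun h : i = c => hc (h ▸ hi)) (D (f c))), add_comm, mul_comm (D (f c))]
      rw [mul_comm]
      congr 1
      refine Finset.sum_congr rfl fun a ha => ?_
      rw [Finset.prod_insert hc, Function.update_of_ne (fun h : c = a => hc (h ▸ ha))]
  rw [← M.det_transpose]
  simp only [← Matrix.det_transpose (M.updateRow _ _), Matrix.det_apply, map_sum]
  rw [Finset.sum_comm]
  refine Finset.sum_congr rfl fun σ _ => ?_
  rw [← Finset.smul_sum, Units.smul_def, map_zsmul, hprod]
  congr 1
  refine Finset.sum_congr rfl fun a _ => Finset.prod_congr rfl fun i _ => ?_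
  rw [Matrix.transpose_apply (M.updateRow _ _), Matrix.updateRow_apply, Function.update_apply]
  split_ifs with h
  · rw [h, Matrix.transpose_apply]
  · rfl

theorem pderiv_shiftDet {l i : ℕ} (hi : 1 ≤ i) (m : Fin l → ℤ) :
    pderiv i (shiftDet m) = ∑ a, shiftDet (Function.update m a (m a - i)) := by
  rw [shiftDet, Derivation.map_det]
  refine Finset.sum_congr rfl fun a _ => ?_
  rw [shiftDet]
  congr 1
  ext1 c b
  simp only [Matrix.updateRow_apply, Matrix.of_apply, Function.update_apply]
  split_ifs with h
  · rw [pderiv_pz hi]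
    congr 1
    ring
  · rfl

theorem toPowerSums_shiftDet_eq_zero {k l : ℕ} (m : Fin l → ℤ)
    (h : ∀ σ : Equiv.Perm (Fin l), ∃ b : Fin l, k ≤ b ∧ m (σ b) + ((b : ℕ) : ℤ) ≠ 0) :
    toPowerSums k (shiftDet m) = 0 := by
  let M : Matrix (Fin l) (Fin l) (MvPolynomial (Fin k) ℚ) :=
    Matrix.of fun a b => toPowerSums k (pz (m a + ((b : ℕ) : ℤ)))
  let U : Matrix (Fin l) (Fin l) (MvPolynomial (Fin k) ℚ) := Matrix.of fun c b =>
    if k ≤ (b : ℕ) then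
      if c ≤ b then PowerSeries.coeff ((b : ℕ) - c) (esymmSeries k) else 0
    else if c = b then 1 else 0
  have hM : toPowerSums k (shiftDet m) = M.det := by
    rw [toPowerSums, shiftDet, AlgHom.map_det]
    rfl
  have hU : U.det = 1 := by
    rw [Matrix.det_of_isUpperTriangular]
    · refine Finset.prod_eq_one fun b _ => ?_
      simp [U, coeff_zero_esymmSeries]
    · intro c b hbc
      have hbc' : b < c := hbc
      simp [U, hbc'.not_ge, hbc'.ne']
  have hMU : ∀ a b : Fin l, k ≤ (b : ℕ) →
      (M * U) a b = if m a + ((b : ℕ) : ℤ) = 0 then 1 else 0 := by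
    intro a b hb
    rw [← sum_toPowerSums_pz_mul_coeff hb, Matrix.mul_apply]
    let g : ℕ → MvPolynomial (Fin k) ℚ := fun c =>
      if c ≤ b then toPowerSums k (pz (m a + c)) * PowerSeries.coeff (b - c) (esymmSeries k) else 0
    have hg : ∀ c : Fin l, M a c * U c b = g c := by
      intro c
      simp only [g, M, U, Matrix.of_apply, if_pos hb, Fin.le_def, mul_ite, mul_zero]
    rw [Finset.sum_congr rfl fun c _ => hg c, Fin.sum_univ_eq_sum_range g, ← Finset.sum_filter]
    refine Finset.sum_congr ?_ fun _ _ => rfl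
    ext c
    simp only [Finset.mem_filter, Finset.mem_range]
    omega
  rw [hM, ← mul_one M.det, ← hU, ← Matrix.det_mul, Matrix.det_apply]
  refine Finset.sum_eq_zero fun σ _ => ?_
  obtain ⟨b, hb, hne⟩ := h σ
  rw [Finset.prod_eq_zero (Finset.mem_univ b) (by rw [hMU _ _ hb, if_neg hne]), smul_zero]

theorem toPowerSums_derivs_shiftDet_eq_zero {k l : ℕ} (L : List ℕ) (hL : ∀ i ∈ L, 1 ≤ i)
    (m : Fin l → ℤ)
    (h : ∀ σ : Equiv.Perm (Fin l), (L.sum : ℤ) <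
      ∑ b ∈ Finset.univ.filter (fun b : Fin l => k ≤ (b : ℕ)), (m (σ b) + ((b : ℕ) : ℤ))) :
    toPowerSums k (derivs L (shiftDet m)) = 0 := by
  induction L using List.reverseRecOn generalizing m with
  | nil =>
    refine toPowerSums_shiftDet_eq_zero m fun σ => ?_
    by_contra! hc
    have h1 := h σ
    rw [Finset.sum_eq_zero fun b hb => hc b (Finset.mem_filter.1 hb).2] at h1
    simp at h1
  | append_singleton L i ih =>
    have hadd : ∀ (s : Finset (Fin l)) (f : Fin l → MvPolynomial ℕ ℚ),
        derivs L (∑ a ∈ s, f a) = ∑ a ∈ s, derivs L (f a) := by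
      intro s f
      clear ih hL h
      induction L with
      | nil => rfl
      | cons j L ihL =>
        change pderiv j (derivs L _) = ∑ a ∈ s, pderiv j (derivs L (f a))
        rw [ihL, map_sum]
    have hstep : derivs (L ++ [i]) (shiftDet m) = derivs L (pderiv i (shiftDet m)) := by
      simp [derivs]
    rw [hstep, pderiv_shiftDet (hL i (by simp)), hadd, toPowerSums, map_sum]
    refine Finset.sum_eq_zero fun a _ => ih (fun j hj => hL j (by simp [hj])) _ fun σ => ?_
    have h1 := h σ
    rw [List.sum_append, List.sum_singleton, Nat.cast_add] at h1
    have h2 : ∀ b : Fin l, Function.update m a (m a - i) (σ b) + ((b : ℕ) : ℤ) =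
        (m (σ b) + ((b : ℕ) : ℤ)) - if b = σ.symm a then (i : ℤ) else 0 := by
      intro b
      simp only [Function.update_apply, Equiv.eq_symm_apply]
      split_ifs with hb
      · rw [hb]
        ring
      · ring
    rw [Finset.sum_congr rfl fun b _ => h2 b, Finset.sum_sub_distrib, Finset.sum_ite_eq']
    split_ifs <;> omega

theorem sum_Ico_pad_le {k l : ℕ} {lam : Fin l → ℕ} (hanti : Antitone lam) (hk : k < l)
    (σ : Equiv.Perm (Fin l)) :
    ((∑ a ∈ Finset.Ico k l, pad lam a : ℕ) : ℤ) ≤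
      ∑ b ∈ Finset.univ.filter (fun b : Fin l => k ≤ (b : ℕ)),
        ((lam (σ b) : ℤ) - ((σ b : ℕ) : ℤ) + ((b : ℕ) : ℤ)) := by
  have hpad : ((∑ a ∈ Finset.Ico k l, pad lam a : ℕ) : ℤ) =
      ∑ b ∈ Finset.univ.filter (fun b : Fin l => k ≤ (b : ℕ)), (lam b : ℤ) := by
    rw [Finset.sum_filter, Finset.sum_fin_eq_sum_range, Finset.range_eq_Ico, Nat.cast_sum,
      ← Finset.sum_subset (Finset.Ico_subset_Ico_left (Nat.zero_le k))]
    · refine Finset.sum_congr rfl fun a ha => ?_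
      have := Finset.mem_Ico.1 ha
      rw [dif_pos this.2, if_pos this.1, pad, dif_pos this.2]
    · intro a ha ha'
      simp only [Finset.mem_Ico] at ha ha'
      rw [dif_pos ha.2, if_neg (fun h => ha' ⟨h, ha.2⟩)]
  let f : Fin l → ℤ := fun a => (lam a : ℤ) - ((a : ℕ) : ℤ)
  let a₀ : Fin l := ⟨k, hk⟩
  have hf : Antitone f := fun a b hab => by
    have h1 := hanti hab
    have h2 : (a : ℕ) ≤ b := hab
    simp only [f]
    omega
  have hmain : ∑ b ∈ Finset.univ.filter (fun b : Fin l => k ≤ (b : ℕ)), (f b - f a₀) ≤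
      ∑ b ∈ Finset.univ.filter (fun b : Fin l => k ≤ (b : ℕ)), (f (σ b) - f a₀) := by
    have hre : ∑ b ∈ Finset.univ.filter (fun b : Fin l => k ≤ (b : ℕ)), (f (σ b) - f a₀) =
        ∑ a ∈ Finset.univ.filter (fun a : Fin l => k ≤ (σ.symm a : ℕ)), (f a - f a₀) := by
      rw [Finset.sum_filter, Finset.sum_filter,
        ← Equiv.sum_comp σ (fun a => if k ≤ (σ.symm a : ℕ) then f a - f a₀ else 0)]
      simp
    rw [hre, Finset.sum_filter, Finset.sum_filter]
    refine Finset.sum_le_sum fun a _ => ?_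
    by_cases hak : k ≤ (a : ℕ)
    · have : f a ≤ f a₀ := hf hak
      split_ifs <;> omega
    · have : f a₀ ≤ f a := hf (Fin.le_def.2 (not_le.1 hak).le)
      split_ifs <;> omega
  rw [hpad]
  simp only [f, Finset.sum_sub_distrib, Finset.sum_add_distrib] at hmain ⊢
  linarith

/-- Let `λ` be a partition of length `l` and `0 ≤ k ≤ l-1`. For any
multi-index `α` (encoded as the list `L` of indices of the derivatives `∂_{i}`, taken with
multiplicity, so that `wt α = L.sum`) with `wt α < N_{λ,k} = λ_{k+1}+⋯+λ_l`, the polynomial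
`∂^α s_λ(t)` evaluated at `t = [x_1]+⋯+[x_k]` vanishes identically. -/
theorem statement5 (l : ℕ) (lam : Fin l → ℕ)
    (hanti : Antitone lam) (hpos : ∀ i, 1 ≤ lam i)
    (k : ℕ) (hk : k + 1 ≤ l)
    (L : List ℕ) (hL : ∀ i ∈ L, 1 ≤ i)
    (hwt : L.sum < ∑ a ∈ Finset.Ico k l, pad lam a) :
    toPowerSums k (derivs L (schur lam)) = 0 := by
  rw [schur]
  exact toPowerSums_derivs_shiftDet_eq_zero L hL (fun a => (lam a : ℤ) - ((a : ℕ) : ℤ))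
    fun σ => lt_of_lt_of_le (by exact_mod_cast hwt) (sum_Ico_pad_le hanti hk σ)
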